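/- Let n ≥ 1. For all but finitely many θ ∈ [0,π), the gradient of Φ^θ_n vanishes at no point of the nodal set N(Φ^θ_n); in particular, for such θ the nodal set N(Φ^θ_n) is a smooth 1-dimensional submanifold of ℝ². -/

import Mathlib

/-- The physicist's Hermite polynomials: `H 0 = 1`, `H 1 = 2X`,
`H (n+2) = 2X · H (n+1) - 2(n+1) · H n`. -/
noncomputable def H : ℕ → Polynomial ℝ
  | 0 => 1
  | 1 => Polynomial.C 2 * Polynomial.X
  | n + 2 => Polynomial.C 2 * Polynomial.X * H (n + 1) - Polynomial.C (2 * (n + 1) : ℝ) * H n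

/-- The eigenfunction `Φ^θ_n(x,y) = (cos θ · H_n(x) + sin θ · H_n(y)) e^{-(x²+y²)/2}`. -/
noncomputable def Phi (n : ℕ) (θ : ℝ) : ℝ × ℝ → ℝ := fun p =>
  (Real.cos θ * (H n).eval p.1 + Real.sin θ * (H n).eval p.2) *
    Real.exp (-(p.1 ^ 2 + p.2 ^ 2) / 2)

/-- The nodal set of `Φ^θ_n`. -/
noncomputable def nodalSet (n : ℕ) (θ : ℝ) : Set (ℝ × ℝ) := {p | Phi n θ p = 0}

/-- The number of nodal domains: the number of connected components of the
complement of the nodal set. -/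
noncomputable def numNodalDomains (n : ℕ) (θ : ℝ) : ℕ :=
  {C : Set (ℝ × ℝ) | ∃ p, Phi n θ p ≠ 0 ∧
    C = connectedComponentIn {q : ℝ × ℝ | Phi n θ q ≠ 0} p}.ncard

/-!
On the nodal set the gradient of `Φ^θ_n` is a positive multiple, by the Gaussian factor, of the
gradient of `cos θ * H n x + sin θ * H n y`. So for
`cos θ * sin θ ≠ 0` a singular point `(x, y)` of the nodal set consists of two critical points
of `H n`, and the line through the origin with normal direction `(cos θ, sin θ)` passes through
the pair of critical values `(H n x, H n y)`. Only finitely many such pairs occur, and none is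
the origin because `H n` is separable: `H n` and `H (n + 1)` are coprime, by the three-term
recurrence, and `(H (n + 1))' = 2 (n + 1) * H n`. Each pair therefore rules out at most one `θ`,
and only `θ = 0` and `θ = π / 2` have been left aside.
-/

section CriticalValues

variable {𝕜 E F G : Type*} [NontriviallyNormedField 𝕜] [NormedAddCommGroup E] [NormedSpace 𝕜 E]
  [NormedAddCommGroup F] [NormedSpace 𝕜 F] [NormedAddCommGroup G] [NormedSpace 𝕜 G]

variable (𝕜) in
/-- The critical values of a scalar function: its values at the points where its derivative
vanishes. It is meant for differentiable functions: since `fderiv` is `0` at a point of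
non-differentiability, the value there is included as well. -/
def criticalValues (f : E → 𝕜) : Set 𝕜 :=
  f '' {x | fderiv 𝕜 f x = 0}

theorem fderiv_smul_eq_zero_iff_of_eq_zero {w : E → 𝕜} {f : E → G} {p : E}
    (hw : DifferentiableAt 𝕜 w p) (hf : DifferentiableAt 𝕜 f p) (hwp : w p ≠ 0) (hfp : f p = 0) :
    fderiv 𝕜 (fun q => w q • f q) p = 0 ↔ fderiv 𝕜 f p = 0 := by
  simp [fderiv_fun_smul hw hf, hfp, hwp]

theorem fderiv_fst_add_snd_eq_zero_iff {f : E → G} {g : F → G} {p : E × F}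
    (hf : DifferentiableAt 𝕜 f p.1) (hg : DifferentiableAt 𝕜 g p.2) :
    fderiv 𝕜 (fun q : E × F => f q.1 + g q.2) p = 0 ↔
      fderiv 𝕜 f p.1 = 0 ∧ fderiv 𝕜 g p.2 = 0 := by
  have hfderiv : fderiv 𝕜 (fun q : E × F => f q.1 + g q.2) p =
      (fderiv 𝕜 f p.1).coprod (fderiv 𝕜 g p.2) :=
    ((hf.hasFDerivAt.comp p hasFDerivAt_fst).add
      (hg.hasFDerivAt.comp p hasFDerivAt_snd)).fderiv
  simp [hfderiv, ContinuousLinearMap.prod_ext_iff]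

theorem mem_criticalValues_prod_of_fderiv_eq_zero {f : E → 𝕜} {g : F → 𝕜} {w : E × F → 𝕜}
    {c s : 𝕜} {p : E × F} (hf : DifferentiableAt 𝕜 f p.1) (hg : DifferentiableAt 𝕜 g p.2)
    (hw : DifferentiableAt 𝕜 w p) (hwp : w p ≠ 0) (hc : c ≠ 0) (hs : s ≠ 0)
    (hzero : c * f p.1 + s * g p.2 = 0)
    (hcrit : fderiv 𝕜 (fun q : E × F => (c * f q.1 + s * g q.2) * w q) p = 0) :
    (f p.1, g p.2) ∈ criticalValues 𝕜 f ×ˢ criticalValues 𝕜 g := by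
  have hcf : DifferentiableAt 𝕜 (fun x => c * f x) p.1 := hf.const_mul c
  have hsg : DifferentiableAt 𝕜 (fun y => s * g y) p.2 := hg.const_mul s
  have hsum : fderiv 𝕜 (fun q : E × F => c * f q.1 + s * g q.2) p = 0 :=
    (fderiv_smul_eq_zero_iff_of_eq_zero hw (by fun_prop) hwp hzero).1
      (by simpa only [smul_eq_mul, mul_comm (w _)] using hcrit)
  rw [fderiv_fst_add_snd_eq_zero_iff hcf hsg, fderiv_const_mul hf, fderiv_const_mul hg] at hsum
  exact ⟨⟨p.1, (smul_eq_zero.1 hsum.1).resolve_left hc, rfl⟩,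
    ⟨p.2, (smul_eq_zero.1 hsum.2).resolve_left hs, rfl⟩⟩

theorem criticalValues_eval (P : Polynomial 𝕜) :
    criticalValues 𝕜 (fun x => P.eval x) =
      (fun x => P.eval x) '' {x | P.derivative.eval x = 0} := by
  have hfderiv (x : 𝕜) : fderiv 𝕜 (fun y => P.eval y) x = 0 ↔ P.derivative.eval x = 0 := by
    rw [P.fderiv, ContinuousLinearMap.ext_ring_iff]
    simp
  simp only [criticalValues, hfderiv]

theorem finite_criticalValues_eval [CharZero 𝕜] (P : Polynomial 𝕜) :
    (criticalValues 𝕜 fun x => P.eval x).Finite := by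
  rw [criticalValues_eval]
  by_cases hP : P.derivative = 0
  · rw [Polynomial.eq_C_of_derivative_eq_zero hP]
    exact (Set.finite_singleton (P.coeff 0)).subset (by rintro _ ⟨x, -, rfl⟩; simp)
  · exact (Polynomial.finite_setOfPred_isRoot hP).image _

theorem zero_notMem_criticalValues_eval {P : Polynomial 𝕜} (hP : P.Separable) :
    0 ∉ criticalValues 𝕜 fun x => P.eval x := by
  rw [criticalValues_eval]
  rintro ⟨x, hx', hx⟩
  exact hP.eval₂_derivative_ne_zero (RingHom.id 𝕜) hx hx'

end CriticalValues

section Angles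

open Real Set

theorem subsingleton_cos_mul_add_sin_mul_eq_zero {v : ℝ × ℝ} (hv : v ≠ 0) :
    {θ ∈ Ico 0 π | cos θ * v.1 + sin θ * v.2 = 0}.Subsingleton := by
  rintro s ⟨⟨hs₀, hsπ⟩, hs⟩ t ⟨⟨ht₀, htπ⟩, ht⟩
  have hfst : sin (s - t) * v.1 = 0 := by
    rw [sin_sub]
    linear_combination sin s * ht - sin t * hs
  have hsnd : sin (s - t) * v.2 = 0 := by
    rw [sin_sub]
    linear_combination cos t * hs - cos s * ht
  have hsin : sin (s - t) = 0 :=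
    (smul_eq_zero.1 (Prod.ext hfst hsnd : sin (s - t) • v = 0)).resolve_right hv
  exact sub_eq_zero.1 ((sin_eq_zero_iff_of_lt_of_lt (by linarith) (by linarith)).1 hsin)

theorem finite_exists_mem_cos_mul_add_sin_mul_eq_zero {S : Set (ℝ × ℝ)} (hS : S.Finite)
    (hS₀ : 0 ∉ S) :
    {θ ∈ Ico 0 π | ∃ v ∈ S, cos θ * v.1 + sin θ * v.2 = 0}.Finite := by
  refine (hS.biUnion fun v hv => (subsingleton_cos_mul_add_sin_mul_eq_zero
    (ne_of_mem_of_not_mem hv hS₀)).finite).subset ?_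
  rintro θ ⟨hθ, v, hv, hθv⟩
  exact mem_biUnion hv ⟨hθ, hθv⟩

end Angles

section Hermite

open Polynomial

theorem derivative_H_succ : ∀ n : ℕ, (H (n + 1)).derivative = C (2 * (n + 1) : ℝ) * H n
  | 0 => by simp [H]
  | 1 => by
    simp only [H, map_ofNat C, CharP.cast_eq_zero, zero_add, mul_one, derivative_sub,
      derivative_mul, derivative_ofNat, zero_mul, derivative_X, sub_zero, Nat.cast_one, map_mul,
      map_add, map_one]
    ring
  | n + 2 => by
    have hH : H (n + 2) = C 2 * X * H (n + 1) - C (2 * (n + 1) : ℝ) * H n := rfl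
    rw [H, derivative_sub, derivative_mul, derivative_C_mul, derivative_C_mul, derivative_X,
      derivative_H_succ (n + 1), derivative_H_succ n, hH]
    simp only [map_mul, map_add, map_natCast, map_one, Nat.cast_add, Nat.cast_one]
    ring

theorem isUnit_C_two_mul_add_one (n : ℕ) : IsUnit (C (2 * (n + 1) : ℝ)) :=
  isUnit_C.2 (by positivity : (2 * (n + 1) : ℝ) ≠ 0).isUnit

theorem isCoprime_H_H_succ : ∀ n : ℕ, IsCoprime (H n) (H (n + 1))
  | 0 => isCoprime_one_left
  | n + 1 => by
    have hcoprime : IsCoprime (H (n + 1)) (C (2 * (n + 1) : ℝ) * H n) :=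
      (isCoprime_mul_unit_left_right (isUnit_C_two_mul_add_one n) _ _).2
        (isCoprime_H_H_succ n).symm
    rw [H, mul_comm (C 2 * X), sub_eq_neg_add]
    exact hcoprime.neg_right.add_mul_left_right _

theorem separable_H : ∀ n : ℕ, (H n).Separable
  | 0 => separable_one
  | n + 1 => by
    rw [Separable, derivative_H_succ]
    exact (isCoprime_mul_unit_left_right (isUnit_C_two_mul_add_one n) _ _).2
      (isCoprime_H_H_succ n).symm

end Hermite

open Real Set in
theorem nodal_set_regular_for_all_but_finitely_many_theta_general {E F : Type*}
    [NormedAddCommGroup E] [NormedSpace ℝ E] [NormedAddCommGroup F] [NormedSpace ℝ F]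
    {f : E → ℝ} {g : F → ℝ} {w : E × F → ℝ}
    (hf : Differentiable ℝ f) (hg : Differentiable ℝ g) (hw : Differentiable ℝ w)
    (hw₀ : ∀ p, w p ≠ 0) (hf_fin : (criticalValues ℝ f).Finite)
    (hg_fin : (criticalValues ℝ g).Finite)
    (h₀ : 0 ∉ criticalValues ℝ f ∨ 0 ∉ criticalValues ℝ g) :
    {θ ∈ Ico 0 π | ¬ ∀ p : E × F, (cos θ * f p.1 + sin θ * g p.2) * w p = 0 →
      fderiv ℝ (fun q : E × F => (cos θ * f q.1 + sin θ * g q.2) * w q) p ≠ 0}.Finite := by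
  -- The two unit vectors account for the angles with `cos θ = 0` or `sin θ = 0`.
  let S : Set (ℝ × ℝ) := {(1, 0), (0, 1)} ∪ criticalValues ℝ f ×ˢ criticalValues ℝ g
  have hS : S.Finite := (toFinite _).union (hf_fin.prod hg_fin)
  have hS₀ : 0 ∉ S := by
    simpa [S, Prod.ext_iff, imp_iff_not_or] using h₀
  refine (finite_exists_mem_cos_mul_add_sin_mul_eq_zero hS hS₀).subset ?_
  rintro θ ⟨hθ, h⟩
  push Not at h
  obtain ⟨p, hp, hp'⟩ := h
  refine ⟨hθ, ?_⟩
  by_cases hc : cos θ = 0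
  · exact ⟨(1, 0), by simp [S], by simp [hc]⟩
  by_cases hs : sin θ = 0
  · exact ⟨(0, 1), by simp [S], by simp [hs]⟩
  have hzero : cos θ * f p.1 + sin θ * g p.2 = 0 := (mul_eq_zero.1 hp).resolve_right (hw₀ p)
  exact ⟨(f p.1, g p.2), Or.inr (mem_criticalValues_prod_of_fderiv_eq_zero (hf _) (hg _) (hw _)
    (hw₀ p) hc hs hzero hp'), hzero⟩

open Real Set in
/-- For all but finitely many `θ ∈ [0,π)`, the gradient of `Φ^θ_n` vanishes at no
point of the nodal set `N(Φ^θ_n)` (so that for such `θ` the nodal set is a smooth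
`1`-dimensional submanifold of `ℝ²`). -/
theorem nodal_set_regular_for_all_but_finitely_many_theta (n : ℕ) (hn : 1 ≤ n) :
    {θ ∈ Set.Ico (0 : ℝ) π |
      ¬ ∀ p ∈ nodalSet n θ, fderiv ℝ (Phi n θ) p ≠ 0}.Finite :=
  nodal_set_regular_for_all_but_finitely_many_theta_general (H n).differentiable
    (H n).differentiable (by fun_prop) (fun _ => (exp_pos _).ne') (finite_criticalValues_eval _)
    (finite_criticalValues_eval _) (Or.inl (zero_notMem_criticalValues_eval (separable_H n)))
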